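/- Let E = E(2,M,p) be a planar fractal percolation with M^{-2} < p. Fix θ ∈ (0, π/4) and ε ∈ (0, min{p, 1/10}) with Mp(1+ε) < 1, and set r := √2·p²·ε²/9, λ := pM(1 + 2ε/3) (so λ < 1), and b_n := (8 log M / r)·n. Let (𝔏_n^θ)_{n≥1} be families of segments built from nested finite sets Δ_n ⊂ Δ_{n+1} ⊂ Δ and A_n^θ ⊂ A_{n+1}^θ ⊂ (θ, π/2 − θ), where Δ_n is an M^{-2n}-dense subset of the diagonal Δ of cardinality M^{2n} and A_n^θ is an M^{-2n}-dense subset of (θ, π/2 − θ) of cardinality M^{2n}; 𝔏_n^θ consists of the segments ℓ ∈ 𝔏^θ with z(ℓ) ∈ Δ_n and Arg(ℓ) ∈ A_n^θ. Define the random variables a_n := max_{ℓ ∈ 𝔏_n^θ} M^{n−1} L_{n−1}(ℓ). Then ℙ-almost surely there exists N₀ (depending on the realization) such that for all n ≥ N₀, either a_n ≤ b_n or a_{n+1} ≤ λ·a_n. -/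

import Mathlib

open MeasureTheory Set ENNReal ProbabilityTheory Real

noncomputable section

/-- The alphabet indexing the `M^d` subcubes of a cube in `[0,1]^d`. -/
abbrev Alpha (d M : ℕ) : Type := Fin d → Fin M

/-- Finite nonempty words over the alphabet; they index `M`-adic cubes. -/
abbrev Word (d M : ℕ) : Type := {w : List (Alpha d M) // w ≠ []}

/-- The sample space: `{0,1}`-labelings of all finite nonempty words. -/
abbrev PercSpace (d M : ℕ) : Type := Word d M → Bool

/-- `P` is the product measure making the labels i.i.d. Bernoulli(`p`). -/
def IsBernoulliPerc (d M : ℕ) (p : ℝ) (P : Measure (PercSpace d M)) : Prop :=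
  IsProbabilityMeasure P ∧
    ∀ (S : Finset (Word d M)) (b : Word d M → Bool),
      P {ω | ∀ w ∈ S, ω w = b w} =
        ∏ w ∈ S, if b w then ENNReal.ofReal p else ENNReal.ofReal (1 - p)

/-- A level-`w.length` cube is retained iff its word and every nonempty prefix
of its word carry label 1. -/
def Retained (d M : ℕ) (ω : PercSpace d M) (w : List (Alpha d M)) : Prop :=
  ∀ (u : List (Alpha d M)) (hu : u ≠ []), u <+: w → ω ⟨u, hu⟩ = true

/-- The `i`-th coordinate of the lower-left corner of the cube indexed by `w`. -/
def wordBase (d M : ℕ) (w : List (Alpha d M)) (i : Fin d) : ℝ :=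
  ∑ j : Fin w.length, ((w.get j) i : ℝ) * (M : ℝ) ^ (-(j : ℤ) - 1)

/-- The closed `M`-adic cube of level `w.length` indexed by the word `w`. -/
def wordCube (d M : ℕ) (w : List (Alpha d M)) : Set (EuclideanSpace ℝ (Fin d)) :=
  {x | ∀ i, wordBase d M w i ≤ x i ∧ x i ≤ wordBase d M w i + (M : ℝ) ^ (-(w.length : ℤ))}

/-- `E_n`, the union of the retained level-`n` cubes. -/
def approx (d M : ℕ) (ω : PercSpace d M) (n : ℕ) : Set (EuclideanSpace ℝ (Fin d)) :=
  ⋃ w ∈ {w : List (Alpha d M) | w.length = n ∧ Retained d M ω w}, wordCube d M w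

/-- The fractal percolation set `E = ⋂_{n ≥ 1} E_n`. -/
def percLimit (d M : ℕ) (ω : PercSpace d M) : Set (EuclideanSpace ℝ (Fin d)) :=
  ⋂ n ∈ {n : ℕ | 1 ≤ n}, approx d M ω n

/-- The segment cut out of `[0,1]²` by the line through `z` with direction `v`. -/
def lineSeg (z v : EuclideanSpace ℝ (Fin 2)) : Set (EuclideanSpace ℝ (Fin 2)) :=
  {x | (∃ t : ℝ, x = z + t • v) ∧ ∀ i, 0 ≤ x i ∧ x i ≤ 1}

/-- The line through `z` with direction `v` meets the open unit square. -/
def MeetsOpenSquare (z v : EuclideanSpace ℝ (Fin 2)) : Prop :=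
  ∃ t : ℝ, ∀ i, 0 < (z + t • v) i ∧ (z + t • v) i < 1

/-- The line with direction `v` makes an acute angle `> θ` with both coordinate
axes (the angle with the `x`-axis has sine `|v 1|/‖v‖`, the one with the
`y`-axis has sine `|v 0|/‖v‖`). -/
def AngleSep (θ : ℝ) (v : EuclideanSpace ℝ (Fin 2)) : Prop :=
  Real.sin θ * ‖v‖ < |v 1| ∧ Real.sin θ * ‖v‖ < |v 0|

/-- The diagonal `Δ` of the unit square, from `(0,1)` to `(1,0)`. -/
def diagSeg : Set (EuclideanSpace ℝ (Fin 2)) :=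
  {x | x 0 + x 1 = 1 ∧ 0 ≤ x 0 ∧ x 0 ≤ 1}

/-- The unit direction vector of angle `α` with the `x`-axis. -/
def dirVec (α : ℝ) : EuclideanSpace ℝ (Fin 2) :=
  (WithLp.equiv 2 (Fin 2 → ℝ)).symm ![Real.cos α, Real.sin α]

def cylS {M : ℕ} (S : Finset (Word 2 M)) (ω₀ : PercSpace 2 M) : Set (PercSpace 2 M) :=
  {ω | ∀ w ∈ S, ω w = ω₀ w}

lemma perc_single {M : ℕ} {p : ℝ} {P : Measure (PercSpace 2 M)} (hP : IsBernoulliPerc 2 M p P)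
    (w : Word 2 M) (b : Bool) :
    P {ω | ω w = b} = if b then ENNReal.ofReal p else ENNReal.ofReal (1 - p) := by
  have := hP.2 {w} (fun _ => b)
  simpa using this

lemma perc_indep {M : ℕ} {p : ℝ} {P : Measure (PercSpace 2 M)} (hP : IsBernoulliPerc 2 M p P) :
    iIndepFun (fun (w : Word 2 M) (ω : PercSpace 2 M) => ω w) P := by
  have := hP.1
  rw [iIndepFun_iff_finset]
  intro S
  have hm : ∀ i : S, Measurable (fun ω : PercSpace 2 M => S.restrict (fun (w : Word 2 M) (ω : PercSpace 2 M) => ω w) i ω) :=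
    fun i => measurable_pi_apply _
  rw [iIndepFun_iff_map_fun_eq_pi_map (fun i => (hm i).aemeasurable)]
  apply Measure.ext_of_singleton
  intro η
  rw [Measure.map_apply (measurable_pi_lambda _ hm) (measurableSet_singleton _),
    Measure.pi_singleton]
  have h2 := hP.2 S (fun w => if h : w ∈ S then η ⟨w, h⟩ else true)
  have h3 : {ω : PercSpace 2 M | ∀ w ∈ S, ω w = if h : w ∈ S then η ⟨w, h⟩ else true}
      = (fun ω i => S.restrict (fun (w : Word 2 M) (ω : PercSpace 2 M) => ω w) i ω) ⁻¹' {η} := by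
    ext ω
    simp only [mem_ofPred_eq, mem_preimage, mem_singleton_iff, funext_iff, Finset.restrict]
    constructor
    · intro h i
      have := h i i.2
      simpa using this
    · intro h w hw
      simpa [hw] using h ⟨w, hw⟩
  rw [← h3, h2, ← Finset.prod_coe_sort]
  apply Finset.prod_congr rfl
  intro i _
  rw [Measure.map_apply (hm i) (measurableSet_singleton _)]
  have := perc_single hP i.1 (η i)
  simp only [Finset.coe_mem, dite_true]
  rw [← this]
  rfl

lemma weighted_tail {M : ℕ} {p : ℝ} {P : Measure (PercSpace 2 M)} (hP : IsBernoulliPerc 2 M p P)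
    (hp : 0 ≤ p) (T : Finset (Word 2 M)) (c : Word 2 M → ℝ) (hc : ∀ w, 0 ≤ c w)
    (V t x : ℝ) (hV : 0 < V) (hcV : ∑ w ∈ T, c w ^ 2 ≤ V) (ht : 0 ≤ t)
    (hx : p * ∑ w ∈ T, c w + t ≤ x) :
    P.real {ω | x ≤ ∑ w ∈ T, c w * (if ω w = true then 1 else 0)} ≤ Real.exp (-2 * t ^ 2 / V) := by
  have := hP.1
  set X : Word 2 M → PercSpace 2 M → ℝ := fun w ω => c w * (if ω w = true then 1 else 0) with hX
  have hbm : ∀ w, Measurable (fun b : Bool => c w * (if b = true then (1 : ℝ) else 0)) :=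
    fun w => measurable_of_countable _
  have hXm : ∀ w, Measurable (X w) := fun w => (hbm w).comp (measurable_pi_apply w)
  have hE : ∀ w, ∫ ω, X w ω ∂P = p * c w := by
    intro w
    have h1 : X w = fun ω => c w * ({ω : PercSpace 2 M | ω w = true}.indicator (fun _ => (1 : ℝ)) ω) := by
      ext ω; simp [hX, indicator]
    rw [h1, integral_const_mul, integral_indicator_const]
    · have := perc_single hP w true
      simp only [if_true] at this
      rw [Measure.real, this, ENNReal.toReal_ofReal hp]
      simp [mul_comm]
    · have hms : MeasurableSet ((fun ω : PercSpace 2 M => ω w) ⁻¹' {true}) :=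
        (measurable_pi_apply w) (measurableSet_singleton true)
      exact hms
  have hsub : ∀ w ∈ T, HasSubgaussianMGF (fun ω => X w ω - P[X w]) ((‖c w - 0‖₊ / 2) ^ 2) P := by
    intro w _
    apply hasSubgaussianMGF_of_mem_Icc (hXm w).aemeasurable
    refine ae_of_all _ fun ω => ?_
    simp only [hX]
    split_ifs <;> simp [hc w]
  have hind : iIndepFun (fun w ω => X w ω - P[X w]) P :=
    (perc_indep hP).comp (fun w b => c w * (if b = true then (1 : ℝ) else 0) - ∫ ω, X w ω ∂P)
      (fun w => (hbm w).sub_const _)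
  have hsum := HasSubgaussianMGF.sum_of_iIndepFun hind hsub
  have hcs : ((∑ w ∈ T, (‖c w - 0‖₊ / 2) ^ 2 : NNReal) : ℝ) = (∑ w ∈ T, c w ^ 2) / 4 := by
    push_cast
    rw [Finset.sum_div]
    apply Finset.sum_congr rfl
    intro w _
    simp only [sub_zero, Real.norm_eq_abs, div_pow, sq_abs]
    norm_num
  have hsum2 : HasSubgaussianMGF (fun ω => ∑ w ∈ T, (X w ω - P[X w])) (V / 4).toNNReal P := by
    refine ⟨hsum.integrable_exp_mul, fun s => (hsum.mgf_le s).trans ?_⟩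
    rw [hcs, Real.coe_toNNReal _ (by positivity)]
    apply Real.exp_le_exp.mpr
    gcongr
  have := hsum2.measure_ge_le ht
  rw [Real.coe_toNNReal _ (by positivity)] at this
  have e : -2 * t ^ 2 / V = -t ^ 2 / (2 * (V / 4)) := by field_simp; ring
  rw [e]
  refine le_trans (measureReal_mono ?_) this
  intro ω hω
  simp only [mem_ofPred_eq] at hω ⊢
  rw [Finset.sum_sub_distrib]
  simp only [hE]
  rw [← Finset.mul_sum]
  linarith

lemma cyl_meas {M : ℕ} (S : Finset (Word 2 M)) (ω₀ : PercSpace 2 M) : MeasurableSet (cylS S ω₀) := by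
  have : cylS S ω₀ = ⋂ w ∈ S, (fun ω : PercSpace 2 M => ω w) ⁻¹' {ω₀ w} := by
    ext; simp [cylS]
  rw [this]
  exact Finset.measurableSet_biInter _ fun w _ =>
    (measurable_pi_apply w) (measurableSet_singleton _)

lemma cyl_cond {M : ℕ} {P : Measure (PercSpace 2 M)} [IsProbabilityMeasure P]
    (S : Finset (Word 2 M)) (F : Set (PercSpace 2 M)) (β : ℝ≥0∞)
    (h : ∀ ω₀, P (F ∩ cylS S ω₀) ≤ β * P (cylS S ω₀)) : P F ≤ β := by
  let ext0 : (S → Bool) → PercSpace 2 M := fun η w => if h : w ∈ S then η ⟨w, h⟩ else true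
  have hcov : F ⊆ ⋃ η ∈ (Finset.univ : Finset (S → Bool)), F ∩ cylS S (ext0 η) := by
    intro ω hω
    simp only [Finset.mem_univ, iUnion_true, mem_iUnion]
    refine ⟨fun w => ω w, hω, fun w hw => ?_⟩
    simp [ext0, hw]
  calc P F ≤ ∑ η : S → Bool, P (F ∩ cylS S (ext0 η)) :=
        (measure_mono hcov).trans (measure_biUnion_finset_le _ _)
    _ ≤ ∑ η : S → Bool, β * P (cylS S (ext0 η)) := Finset.sum_le_sum fun η _ => h _
    _ = β * ∑ η : S → Bool, P (cylS S (ext0 η)) := by rw [Finset.mul_sum]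
    _ = β * P (⋃ η ∈ (Finset.univ : Finset (S → Bool)), cylS S (ext0 η)) := by
        rw [measure_biUnion_finset]
        · intro η _ η' _ hne
          rw [Function.onFun, Set.disjoint_left]
          intro ω h1 h2
          apply hne
          ext w
          have := (h1 w w.2).symm.trans (h2 w w.2)
          simpa [ext0] using this
        · exact fun η _ => cyl_meas _ _
    _ ≤ β * 1 := by gcongr; exact prob_le_one
    _ = β := mul_one _

lemma cyl_inter {M : ℕ} {p : ℝ} {P : Measure (PercSpace 2 M)} (hP : IsBernoulliPerc 2 M p P)
    (S T : Finset (Word 2 M)) (hST : Disjoint S T) (c : Word 2 M → ℝ) (x : ℝ) (ω₀ : PercSpace 2 M) :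
    P ({ω | x ≤ ∑ w ∈ T, c w * (if ω w = true then 1 else 0)} ∩ cylS S ω₀) =
      P {ω | x ≤ ∑ w ∈ T, c w * (if ω w = true then 1 else 0)} * P (cylS S ω₀) := by
  have hi := (perc_indep hP).indepFun_finset S T hST (fun i => measurable_pi_apply i)
  have h := hi.measure_inter_preimage_eq_mul {η | ∀ w : S, η w = ω₀ w}
    {η | x ≤ ∑ w : T, c w * (if η w = true then (1:ℝ) else 0)}
    (Set.toFinite _).measurableSet (Set.toFinite _).measurableSet
  have e1 : (fun (a : PercSpace 2 M) (i : S) ↦ a i) ⁻¹' {η | ∀ w : S, η w = ω₀ w} = cylS S ω₀ := by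
    ext ω; simp [cylS]
  have e2 : (fun (a : PercSpace 2 M) (i : T) ↦ a i) ⁻¹'
      {η | x ≤ ∑ w : T, c w * (if η w = true then (1:ℝ) else 0)} =
      {ω | x ≤ ∑ w ∈ T, c w * (if ω w = true then 1 else 0)} := by
    ext ω
    simp only [mem_preimage, mem_ofPred_eq]
    rw [Finset.sum_coe_sort T (fun w => c w * (if ω w = true then (1:ℝ) else 0))]
  rw [e1, e2] at h
  rw [inter_comm, h, mul_comm]

abbrev E2 : Type := EuclideanSpace ℝ (Fin 2)

def idxW (M : ℕ) (w : List (Alpha 2 M)) (i : Fin 2) : ℕ :=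
  w.foldl (fun acc a => M * acc + (a i).val) 0

lemma idxW_append (M : ℕ) (w : List (Alpha 2 M)) (a : Alpha 2 M) (i : Fin 2) :
    idxW M (w ++ [a]) i = M * idxW M w i + (a i).val := by
  simp [idxW]

lemma idxW_lt (M : ℕ) (w : List (Alpha 2 M)) (i : Fin 2) : idxW M w i < M ^ w.length := by
  induction w using List.reverseRecOn with
  | nil => simp [idxW]
  | append_singleton w a ih =>
    rw [idxW_append, List.length_append, List.length_singleton, pow_succ]
    have h1 := (a i).isLt
    have h2 : M * (idxW M w i + 1) ≤ M * M ^ w.length := Nat.mul_le_mul_left _ ih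
    nlinarith

lemma idxW_inj (M : ℕ) (w : List (Alpha 2 M)) : ∀ w' : List (Alpha 2 M), w.length = w'.length →
    (∀ i, idxW M w i = idxW M w' i) → w = w' := by
  induction w using List.reverseRecOn with
  | nil =>
    intro w' h _
    exact (List.length_eq_zero_iff.mp h.symm).symm
  | append_singleton w a ih =>
    intro w' h hi
    induction w' using List.reverseRecOn with
    | nil => simp at h
    | append_singleton w' a' _ =>
      simp only [List.length_append, List.length_singleton] at h
      simp only [idxW_append] at hi
      have hM : 0 < M := lt_of_le_of_lt (Nat.zero_le _) (a 0).isLt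
      have h1 : ∀ i, idxW M w i = idxW M w' i := by
        intro i
        have := congrArg (· / M) (hi i)
        simpa [Nat.mul_add_div hM, Nat.div_eq_of_lt (a i).isLt, Nat.div_eq_of_lt (a' i).isLt] using this
      have h2 : a = a' := by
        ext i
        have := hi i
        rw [h1 i] at this
        omega
      rw [ih w' (by simpa using h) h1, h2]

lemma wordBase_append (M : ℕ) (w : List (Alpha 2 M)) (a : Alpha 2 M) (i : Fin 2) :
    wordBase 2 M (w ++ [a]) i = wordBase 2 M w i + ((a i : ℕ) : ℝ) * (M : ℝ) ^ (-(w.length : ℤ) - 1) := by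
  have key : ∀ u : List (Alpha 2 M), wordBase 2 M u i =
      ∑ j ∈ Finset.range u.length, (((u[j]?).map (fun b => ((b i : ℕ) : ℝ))).getD 0) * (M : ℝ) ^ (-(j : ℤ) - 1) := by
    intro u
    rw [Finset.sum_range]
    unfold wordBase
    apply Finset.sum_congr rfl
    intro j _
    simp
  rw [key, key, List.length_append, List.length_singleton, Finset.sum_range_succ]
  congr 1
  · apply Finset.sum_congr rfl
    intro j hj
    rw [List.getElem?_append_left (Finset.mem_range.mp hj)]
  · simp

lemma wordBase_eq (M : ℕ) (hM : 0 < M) (w : List (Alpha 2 M)) (i : Fin 2) :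
    wordBase 2 M w i = (idxW M w i : ℝ) * ((M : ℝ) ^ w.length)⁻¹ := by
  have hM' : (M : ℝ) ≠ 0 := by positivity
  induction w using List.reverseRecOn with
  | nil => simp [idxW, wordBase]
  | append_singleton w a ih =>
    rw [wordBase_append, ih, idxW_append, List.length_append, List.length_singleton, pow_succ]
    have : (M : ℝ) ^ (-(w.length : ℤ) - 1) = ((M : ℝ) ^ w.length)⁻¹ * (M : ℝ)⁻¹ := by
      rw [zpow_sub₀ hM', zpow_neg, zpow_natCast, zpow_one]; rfl
    rw [this]
    push_cast
    field_simp

def slo (h : ℝ) (k : Fin 2 → ℕ) (z v : E2) : ℝ :=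
  max ((k 0 * h - z 0) / v 0) ((k 1 * h - z 1) / v 1)

def shi (h : ℝ) (k : Fin 2 → ℕ) (z v : E2) : ℝ :=
  min (((k 0 + 1) * h - z 0) / v 0) (((k 1 + 1) * h - z 1) / v 1)

def glen (h : ℝ) (k : Fin 2 → ℕ) (z v : E2) : ℝ := max 0 (shi h k z v - slo h k z v)

lemma glen_nonneg (h : ℝ) (k : Fin 2 → ℕ) (z v : E2) : 0 ≤ glen h k z v := le_max_left _ _

def openI (h : ℝ) (k : Fin 2 → ℕ) (z v : E2) : Set ℝ :=
  {t | ∀ i, k i * h < z i + t * v i ∧ z i + t * v i < (k i + 1) * h}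

def closedI (h : ℝ) (k : Fin 2 → ℕ) (z v : E2) : Set ℝ :=
  {t | ∀ i, k i * h ≤ z i + t * v i ∧ z i + t * v i ≤ (k i + 1) * h}

lemma openI_eq (h : ℝ) (k : Fin 2 → ℕ) (z v : E2) (hv : ∀ i, 0 < v i) :
    openI h k z v = Ioo (slo h k z v) (shi h k z v) := by
  ext t
  simp only [openI, slo, shi, mem_ofPred_eq, mem_Ioo, Fin.forall_fin_two, max_lt_iff, lt_min_iff,
    div_lt_iff₀ (hv 0), div_lt_iff₀ (hv 1), lt_div_iff₀ (hv 0), lt_div_iff₀ (hv 1)]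
  constructor
  · rintro ⟨⟨h1, h2⟩, h3, h4⟩
    refine ⟨⟨?_, ?_⟩, ?_, ?_⟩ <;> linarith
  · rintro ⟨⟨h1, h2⟩, h3, h4⟩
    refine ⟨⟨?_, ?_⟩, ?_, ?_⟩ <;> linarith

lemma closedI_eq (h : ℝ) (k : Fin 2 → ℕ) (z v : E2) (hv : ∀ i, 0 < v i) :
    closedI h k z v = Icc (slo h k z v) (shi h k z v) := by
  ext t
  simp only [closedI, slo, shi, mem_ofPred_eq, mem_Icc, Fin.forall_fin_two, max_le_iff, le_min_iff,
    div_le_iff₀ (hv 0), div_le_iff₀ (hv 1), le_div_iff₀ (hv 0), le_div_iff₀ (hv 1)]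
  constructor
  · rintro ⟨⟨h1, h2⟩, h3, h4⟩
    refine ⟨⟨?_, ?_⟩, ?_, ?_⟩ <;> linarith
  · rintro ⟨⟨h1, h2⟩, h3, h4⟩
    refine ⟨⟨?_, ?_⟩, ?_, ?_⟩ <;> linarith

lemma ofReal_glen (h : ℝ) (k : Fin 2 → ℕ) (z v : E2) :
    ENNReal.ofReal (glen h k z v) = ENNReal.ofReal (shi h k z v - slo h k z v) := by
  unfold glen
  rcases le_total 0 (shi h k z v - slo h k z v) with h1 | h1
  · rw [max_eq_right h1]
  · rw [max_eq_left h1, ENNReal.ofReal_of_nonpos h1, ENNReal.ofReal_zero]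

lemma vol_openI (h : ℝ) (k : Fin 2 → ℕ) (z v : E2) (hv : ∀ i, 0 < v i) :
    volume (openI h k z v) = ENNReal.ofReal (glen h k z v) := by
  rw [openI_eq _ _ _ _ hv, Real.volume_Ioo, ofReal_glen]

lemma vol_closedI (h : ℝ) (k : Fin 2 → ℕ) (z v : E2) (hv : ∀ i, 0 < v i) :
    volume (closedI h k z v) = ENNReal.ofReal (glen h k z v) := by
  rw [closedI_eq _ _ _ _ hv, Real.volume_Icc, ofReal_glen]

/-- The level sets are linearly ordered along the line. -/
lemma openI_le (h : ℝ) (hh : 0 < h) (k k' : Fin 2 → ℕ) (z v : E2) (hv : ∀ i, 0 < v i) (t t' : ℝ)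
    (htt : t ≤ t') (ht : t ∈ openI h k z v) (ht' : t' ∈ openI h k' z v) (i : Fin 2) : k i ≤ k' i := by
  have h1 := (ht i).1
  have h2 := (ht' i).2
  have h3 : t * v i ≤ t' * v i := mul_le_mul_of_nonneg_right htt (hv i).le
  have h4 : (k i : ℝ) * h < ((k' i + 1 : ℕ) : ℝ) * h := by push_cast; linarith
  have h5 := lt_of_mul_lt_mul_right h4 hh.le
  have : k i < k' i + 1 := by exact_mod_cast h5
  omega

lemma openI_sum_inj (h : ℝ) (hh : 0 < h) (k k' : Fin 2 → ℕ) (z v : E2) (hv : ∀ i, 0 < v i) (t t' : ℝ)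
    (ht : t ∈ openI h k z v) (ht' : t' ∈ openI h k' z v) (hs : k 0 + k 1 = k' 0 + k' 1) (i : Fin 2) :
    k i = k' i := by
  rcases le_total t t' with htt | htt
  · have h0 := openI_le h hh k k' z v hv t t' htt ht ht' 0
    have h1 := openI_le h hh k k' z v hv t t' htt ht ht' 1
    fin_cases i <;> simp <;> omega
  · have h0 := openI_le h hh k' k z v hv t' t htt ht' ht 0
    have h1 := openI_le h hh k' k z v hv t' t htt ht' ht 1
    fin_cases i <;> simp <;> omega

lemma openI_inj (h : ℝ) (hh : 0 < h) (k k' : Fin 2 → ℕ) (z v : E2) (hv : ∀ i, 0 < v i) (t : ℝ)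
    (ht : t ∈ openI h k z v) (ht' : t ∈ openI h k' z v) (i : Fin 2) :
    k i = k' i :=
  le_antisymm (openI_le h hh k k' z v hv t t le_rfl ht ht' i)
    (openI_le h hh k' k z v hv t t le_rfl ht' ht i)

def wlen (M : ℕ) (w : List (Alpha 2 M)) (z v : E2) : ℝ := glen ((M : ℝ) ^ w.length)⁻¹ (idxW M w) z v

lemma wlen_nonneg (M : ℕ) (w : List (Alpha 2 M)) (z v : E2) : 0 ≤ wlen M w z v := glen_nonneg _ _ _ _

def wordsN (M n : ℕ) : Finset (List (Alpha 2 M)) := (List.finite_length_eq (Alpha 2 M) n).toFinset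

lemma mem_wordsN {M n : ℕ} {w : List (Alpha 2 M)} : w ∈ wordsN M n ↔ w.length = n := by
  simp [wordsN]

lemma openI_pairwise {M : ℕ} (hM : 0 < M) (n : ℕ) (W : Finset (List (Alpha 2 M)))
    (hW : ∀ w ∈ W, w.length = n) (z v : E2) (hv : ∀ i, 0 < v i) :
    (W : Set (List (Alpha 2 M))).PairwiseDisjoint (fun w => openI ((M : ℝ) ^ n)⁻¹ (idxW M w) z v) := by
  intro w hw w' hw' hne
  rw [Function.onFun, Set.disjoint_left]
  intro t ht ht'
  apply hne
  apply idxW_inj M w w' ((hW w hw).trans (hW w' hw').symm)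
  exact openI_inj _ (by positivity) _ _ z v hv t ht ht'

lemma sum_wlen_le {M : ℕ} (hM : 0 < M) (n : ℕ) (W : Finset (List (Alpha 2 M)))
    (hW : ∀ w ∈ W, w.length = n) (z v : E2) (hv : ∀ i, 0 < v i) (B : Set ℝ)
    (hB : ∀ w ∈ W, openI ((M : ℝ) ^ n)⁻¹ (idxW M w) z v ⊆ B) :
    ENNReal.ofReal (∑ w ∈ W, wlen M w z v) ≤ volume B := by
  rw [ENNReal.ofReal_sum_of_nonneg (fun w _ => wlen_nonneg M w z v)]
  calc ∑ w ∈ W, ENNReal.ofReal (wlen M w z v)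
      = ∑ w ∈ W, volume (openI ((M : ℝ) ^ n)⁻¹ (idxW M w) z v) := by
        apply Finset.sum_congr rfl
        intro w hw
        rw [vol_openI _ _ _ _ hv, wlen, hW w hw]
    _ = volume (⋃ w ∈ W, openI ((M : ℝ) ^ n)⁻¹ (idxW M w) z v) := by
        rw [measure_biUnion_finset (openI_pairwise hM n W hW z v hv)]
        intro w _
        rw [openI_eq _ _ _ _ hv]
        exact measurableSet_Ioo
    _ ≤ volume B := measure_mono (iUnion₂_subset hB)

lemma hausdorff_line (z v : E2) (hv1 : ‖v‖ = 1) (B : Set E2) :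
    μH[1] (B ∩ lineSeg z v) = volume {t : ℝ | z + t • v ∈ B ∧ ∀ i, 0 ≤ z i + t * v i ∧ z i + t * v i ≤ 1} := by
  have hf : Isometry (fun t : ℝ => z + t • v) := by
    apply Isometry.of_dist_eq
    intro s t
    rw [dist_add_left, dist_eq_norm, ← sub_smul, norm_smul, hv1, mul_one, dist_eq_norm]
  have h := hf.hausdorffMeasure_preimage (d := 1) (Or.inl zero_le_one) (B ∩ lineSeg z v)
  rw [hausdorffMeasure_real] at h
  have e : (B ∩ lineSeg z v) ∩ range (fun t : ℝ => z + t • v) = B ∩ lineSeg z v := by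
    apply inter_eq_left.mpr
    rintro x ⟨_, ⟨t, ht⟩, _⟩
    exact ⟨t, ht.symm⟩
  rw [e] at h
  rw [← h]
  congr 1
  ext t
  simp only [mem_preimage, mem_inter_iff, mem_ofPred_eq, lineSeg]
  constructor
  · rintro ⟨h1, _, h2⟩
    exact ⟨h1, by simpa using h2⟩
  · rintro ⟨h1, h2⟩
    exact ⟨h1, ⟨t, rfl⟩, by simpa using h2⟩

open Classical in
def retW (M : ℕ) (ω : PercSpace 2 M) (n : ℕ) : Finset (List (Alpha 2 M)) :=
  (wordsN M n).filter (fun w => Retained 2 M ω w)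

lemma mem_retW {M : ℕ} {ω : PercSpace 2 M} {n : ℕ} {w : List (Alpha 2 M)} :
    w ∈ retW M ω n ↔ w.length = n ∧ Retained 2 M ω w := by
  simp [retW, mem_wordsN]

lemma mem_wordCube_line {M : ℕ} (hM : 0 < M) (w : List (Alpha 2 M)) (z v : E2) (t : ℝ) :
    z + t • v ∈ wordCube 2 M w ↔ t ∈ closedI ((M : ℝ) ^ w.length)⁻¹ (idxW M w) z v := by
  simp only [wordCube, closedI, mem_ofPred_eq, wordBase_eq M hM, zpow_neg, zpow_natCast]
  apply forall_congr'
  intro i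
  rw [add_mul, one_mul]
  simp

lemma slice_eq {M : ℕ} (hM : 0 < M) (ω : PercSpace 2 M) (n : ℕ) (z v : E2) (hv : ∀ i, 0 < v i)
    (hv1 : ‖v‖ = 1) :
    μH[1] (approx 2 M ω n ∩ lineSeg z v) = ENNReal.ofReal (∑ w ∈ retW M ω n, wlen M w z v) := by
  rw [hausdorff_line z v hv1]
  have hMn : (0 : ℝ) < (M : ℝ) ^ n := by positivity
  apply le_antisymm
  · rw [ENNReal.ofReal_sum_of_nonneg (fun w _ => wlen_nonneg M w z v)]
    calc _ ≤ volume (⋃ w ∈ retW M ω n, closedI ((M : ℝ) ^ w.length)⁻¹ (idxW M w) z v) := by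
          apply measure_mono
          rintro t ⟨ht, _⟩
          simp only [approx, mem_iUnion, mem_ofPred_eq] at ht ⊢
          obtain ⟨w, hw, hx⟩ := ht
          exact ⟨w, mem_retW.mpr hw, (mem_wordCube_line hM w z v t).mp hx⟩
      _ ≤ ∑ w ∈ retW M ω n, volume (closedI ((M : ℝ) ^ w.length)⁻¹ (idxW M w) z v) :=
          measure_biUnion_finset_le _ _
      _ = _ := by
          apply Finset.sum_congr rfl
          intro w _
          rw [vol_closedI _ _ _ _ hv, wlen]
  · apply sum_wlen_le hM n _ (fun w hw => (mem_retW.mp hw).1) z v hv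
    intro w hw t ht
    have hl := (mem_retW.mp hw).1
    refine ⟨?_, fun i => ⟨?_, ?_⟩⟩
    · simp only [approx, mem_iUnion, mem_ofPred_eq]
      refine ⟨w, mem_retW.mp hw, (mem_wordCube_line hM w z v t).mpr ?_⟩
      rw [hl]
      exact fun i => ⟨(ht i).1.le, (ht i).2.le⟩
    · refine le_trans ?_ (ht i).1.le
      positivity
    · refine (ht i).2.le.trans ?_
      rw [← div_eq_mul_inv, div_le_one hMn]
      have := idxW_lt M w i
      rw [hl] at this
      exact_mod_cast this

lemma sum_children_le {M : ℕ} (hM : 0 < M) (w : List (Alpha 2 M)) (z v : E2) (hv : ∀ i, 0 < v i) :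
    ∑ a : Alpha 2 M, wlen M (w ++ [a]) z v ≤ wlen M w z v := by
  have hM' : (0 : ℝ) < M := by positivity
  have hinj : Function.Injective (fun a : Alpha 2 M => w ++ [a]) := by
    intro a b h
    simpa using h
  have h := sum_wlen_le hM (w.length + 1) (Finset.univ.map ⟨fun a : Alpha 2 M => w ++ [a], hinj⟩)
    (by simp) z v hv (openI ((M : ℝ) ^ w.length)⁻¹ (idxW M w) z v) (by
      intro u hu t ht i
      simp only [Finset.mem_map, Finset.mem_univ, true_and, Function.Embedding.coeFn_mk] at hu
      obtain ⟨a, rfl⟩ := hu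
      have hi := ht i
      rw [idxW_append, pow_succ, mul_inv] at hi
      have hH : (0 : ℝ) < ((M : ℝ) ^ w.length)⁻¹ := by positivity
      set H := ((M : ℝ) ^ w.length)⁻¹ with hHd
      have ha : ((a i : ℕ) : ℝ) + 1 ≤ M := by exact_mod_cast (a i).isLt
      have hMM : (M : ℝ) * (M : ℝ)⁻¹ = 1 := mul_inv_cancel₀ hM'.ne'
      have hHM : 0 < H * (M : ℝ)⁻¹ := by positivity
      push_cast at hi
      have e : H = M * (H * (M : ℝ)⁻¹) := by
        field_simp
      constructor
      · refine lt_of_le_of_lt ?_ hi.1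
        nth_rewrite 1 [e]
        nlinarith [mul_nonneg (Nat.cast_nonneg (α := ℝ) (a i).val) hHM.le]
      · refine lt_of_lt_of_le hi.2 ?_
        nth_rewrite 2 [e]
        nlinarith)
  rw [Finset.sum_map, vol_openI _ _ _ _ hv] at h
  exact (ENNReal.ofReal_le_ofReal_iff (glen_nonneg _ _ _ _)).mp h

lemma glen_le {h : ℝ} (hh : 0 < h) (k : Fin 2 → ℕ) (z v : E2) (hv : ∀ i, 0 < v i) (hv1 : ‖v‖ = 1) :
    glen h k z v ≤ √2 * h := by
  have hn : v 0 ^ 2 + v 1 ^ 2 = 1 := by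
    have := EuclideanSpace.norm_sq_eq v
    rw [hv1] at this
    simp [Fin.sum_univ_two] at this
    linarith
  have h0 : glen h k z v ≤ h / v 0 := by
    apply max_le (div_nonneg hh.le (hv 0).le)
    calc _ ≤ ((k 0 + 1) * h - z 0) / v 0 - (k 0 * h - z 0) / v 0 :=
          sub_le_sub (min_le_left _ _) (le_max_left _ _)
      _ = h / v 0 := by ring
  have h1 : glen h k z v ≤ h / v 1 := by
    apply max_le (div_nonneg hh.le (hv 1).le)
    calc _ ≤ ((k 1 + 1) * h - z 1) / v 1 - (k 1 * h - z 1) / v 1 :=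
          sub_le_sub (min_le_right _ _) (le_max_right _ _)
      _ = h / v 1 := by ring
  rw [le_div_iff₀ (hv _)] at h0 h1
  have hg := glen_nonneg h k z v
  apply (pow_le_pow_iff_left₀ hg (by positivity) two_ne_zero).mp
  rw [mul_pow, Real.sq_sqrt (by norm_num)]
  have a0 := pow_le_pow_left₀ (mul_nonneg hg (hv 0).le) h0 2
  have a1 := pow_le_pow_left₀ (mul_nonneg hg (hv 1).le) h1 2
  nlinarith

lemma div_lip {s δ x x' v v' : ℝ} (hs : 0 < s) (hv : s ≤ v) (hv' : s ≤ v') (hx : |x - x'| ≤ δ)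
    (hx' : |x'| ≤ 1) (hvv : |v - v'| ≤ δ) : |x / v - x' / v'| ≤ (1 / s + 1 / s ^ 2) * δ := by
  have hv0 : 0 < v := by linarith
  have hv0' : 0 < v' := by linarith
  have hδ : 0 ≤ δ := (abs_nonneg _).trans hx
  have e : x / v - x' / v' = (x - x') / v + x' * (v' - v) / (v * v') := by
    field_simp; ring
  rw [e]
  refine (abs_add_le _ _).trans ?_
  rw [abs_div, abs_div, abs_mul, abs_of_pos hv0, abs_of_pos (mul_pos hv0 hv0'), abs_sub_comm v' v,
    add_mul]
  apply add_le_add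
  · rw [one_div_mul_eq_div]
    gcongr
  · rw [one_div_mul_eq_div]
    have h1 : |x'| * |v - v'| ≤ δ := by nlinarith [abs_nonneg (v - v'), abs_nonneg x']
    have h2 : s ^ 2 ≤ v * v' := by nlinarith
    gcongr

lemma glen_lip {s δ h : ℝ} (hs : 0 < s) (k : Fin 2 → ℕ) (z v z' v' : E2)
    (hv : ∀ i, s ≤ v i) (hv' : ∀ i, s ≤ v' i) (hz : ∀ i, |z i - z' i| ≤ δ)
    (hvv : ∀ i, |v i - v' i| ≤ δ) (hz' : ∀ i, 0 ≤ z' i ∧ z' i ≤ 1) (hh : 0 < h)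
    (hk : ∀ i, ((k i : ℝ) + 1) * h ≤ 1) :
    glen h k z v ≤ glen h k z' v' + 2 * ((1 / s + 1 / s ^ 2) * δ) := by
  have hδ : 0 ≤ δ := (abs_nonneg _).trans (hz 0)
  set K := (1 / s + 1 / s ^ 2) * δ with hK
  have hK0 : 0 ≤ K := by positivity
  have hkh : ∀ i, 0 ≤ (k i : ℝ) * h := fun i => by positivity
  have hlo : ∀ i, |(k i * h - z i) / v i - (k i * h - z' i) / v' i| ≤ K := by
    intro i
    apply div_lip hs (hv i) (hv' i) _ _ (hvv i)
    · rw [_root_.sub_sub_sub_cancel_left, abs_sub_comm]; exact hz i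
    · have := hz' i
      have := hk i
      have := hkh i
      rw [abs_le]; constructor <;> linarith
  have hhi : ∀ i, |((k i + 1) * h - z i) / v i - ((k i + 1) * h - z' i) / v' i| ≤ K := by
    intro i
    apply div_lip hs (hv i) (hv' i) _ _ (hvv i)
    · rw [_root_.sub_sub_sub_cancel_left, abs_sub_comm]; exact hz i
    · have := hz' i
      have := hk i
      have := hkh i
      rw [abs_le]; constructor <;> linarith
  have h1 : shi h k z v ≤ shi h k z' v' + K := by
    unfold shi
    rw [← min_add_add_right]
    have a0 := (abs_le.mp (hhi 0)).2
    have a1 := (abs_le.mp (hhi 1)).2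
    exact min_le_min (by linarith) (by linarith)
  have h2 : slo h k z' v' ≤ slo h k z v + K := by
    unfold slo
    rw [← max_add_add_right]
    have a0 := (abs_le.mp (hlo 0)).1
    have a1 := (abs_le.mp (hlo 1)).1
    exact max_le_max (by linarith) (by linarith)
  have h3 : shi h k z' v' - slo h k z' v' ≤ glen h k z' v' := le_max_right _ _
  have h4 := glen_nonneg h k z' v'
  apply max_le <;> linarith

lemma card_hit {M : ℕ} (hM : 0 < M) (n : ℕ) (W : Finset (List (Alpha 2 M)))
    (hW : ∀ w ∈ W, w.length = n) (z v : E2) (hv : ∀ i, 0 < v i) (hpos : ∀ w ∈ W, 0 < wlen M w z v) :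
    W.card ≤ 2 * M ^ n := by
  have hne : ∀ w ∈ W, ∃ t, t ∈ openI ((M : ℝ) ^ n)⁻¹ (idxW M w) z v := by
    intro w hw
    have h := hpos w hw
    rw [wlen, hW w hw, glen, lt_max_iff] at h
    rcases h with h | h
    · exact absurd h (lt_irrefl _)
    · rw [openI_eq _ _ _ _ hv]
      exact nonempty_Ioo.mpr (by linarith)
  have := Finset.card_le_card_of_injOn (s := W) (t := Finset.range (2 * M ^ n))
    (fun w => idxW M w 0 + idxW M w 1) (by
      intro w hw
      have h0 := idxW_lt M w 0
      have h1 := idxW_lt M w 1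
      rw [hW w hw] at h0 h1
      simp only [Finset.coe_range, mem_Iio]
      omega) (by
      intro w hw w' hw' hs
      obtain ⟨t, ht⟩ := hne w hw
      obtain ⟨t', ht'⟩ := hne w' hw'
      apply idxW_inj M w w' ((hW w hw).trans (hW w' hw').symm)
      exact openI_sum_inj _ (by positivity) _ _ z v hv t t' ht ht' hs)
  simpa using this

lemma sum_lip {M : ℕ} (hM : 0 < M) (n : ℕ) (W : Finset (List (Alpha 2 M)))
    (hW : ∀ w ∈ W, w.length = n) {s δ : ℝ} (hs : 0 < s) (z v z' v' : E2)
    (hv : ∀ i, s ≤ v i) (hv' : ∀ i, s ≤ v' i) (hz : ∀ i, |z i - z' i| ≤ δ)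
    (hvv : ∀ i, |v i - v' i| ≤ δ) (hz' : ∀ i, 0 ≤ z' i ∧ z' i ≤ 1) :
    ∑ w ∈ W, wlen M w z v ≤ ∑ w ∈ W, wlen M w z' v' +
      2 * (M : ℝ) ^ n * (2 * ((1 / s + 1 / s ^ 2) * δ)) := by
  have hδ : 0 ≤ δ := (abs_nonneg _).trans (hz 0)
  have hMn : (0 : ℝ) < (M : ℝ) ^ n := by positivity
  set K := 2 * ((1 / s + 1 / s ^ 2) * δ) with hK
  have hK0 : 0 ≤ K := by positivity
  calc ∑ w ∈ W, wlen M w z v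
      ≤ ∑ w ∈ W, (wlen M w z' v' + if 0 < wlen M w z v then K else 0) := by
        apply Finset.sum_le_sum
        intro w hw
        split_ifs with h
        · rw [wlen, wlen, hW w hw]
          apply glen_lip hs _ z v z' v' hv hv' hz hvv hz' (by positivity)
          intro i
          rw [← div_eq_mul_inv, div_le_one hMn]
          have := idxW_lt M w i
          rw [hW w hw] at this
          exact_mod_cast this
        · have := wlen_nonneg M w z' v'
          linarith
    _ = ∑ w ∈ W, wlen M w z' v' + (W.filter (fun w => 0 < wlen M w z v)).card * K := by
        rw [Finset.sum_add_distrib, ← Finset.sum_filter, Finset.sum_const, nsmul_eq_mul]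
    _ ≤ _ := by
        have := card_hit hM n (W.filter (fun w => 0 < wlen M w z v))
          (fun w hw => hW w (Finset.mem_filter.mp hw).1) z v (fun i => hs.trans_le (hv i))
          (fun w hw => (Finset.mem_filter.mp hw).2)
        have h2 : ((W.filter (fun w => 0 < wlen M w z v)).card : ℝ) ≤ 2 * (M : ℝ) ^ n := by
          exact_mod_cast this
        gcongr

/-- Rescaled slice length. -/
def Uslice (M : ℕ) (ω : PercSpace 2 M) (n : ℕ) (z v : E2) : ℝ :=
  (M : ℝ) ^ n * ∑ w ∈ retW M ω n, wlen M w z v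

lemma Uslice_nonneg (M : ℕ) (ω : PercSpace 2 M) (n : ℕ) (z v : E2) : 0 ≤ Uslice M ω n z v :=
  mul_nonneg (by positivity) (Finset.sum_nonneg fun w _ => wlen_nonneg M w z v)

lemma Uslice_lip {M : ℕ} (hM : 0 < M) (ω : PercSpace 2 M) (m : ℕ) {s δ : ℝ} (hs : 0 < s) (z v z' v' : E2)
    (hv : ∀ i, s ≤ v i) (hv' : ∀ i, s ≤ v' i) (hz : ∀ i, |z i - z' i| ≤ δ)
    (hvv : ∀ i, |v i - v' i| ≤ δ) (hz' : ∀ i, 0 ≤ z' i ∧ z' i ≤ 1)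
    (hδ : δ = ((M : ℝ) ^ (2 * (m + 1)))⁻¹) :
    Uslice M ω m z v ≤ Uslice M ω m z' v' + 4 * (1 / s + 1 / s ^ 2) := by
  have h := sum_lip hM m (retW M ω m) (fun w hw => (mem_retW.mp hw).1) hs z v z' v' hv hv' hz hvv hz'
  have hM1 : (1 : ℝ) ≤ M := by exact_mod_cast hM
  have hMn : (0 : ℝ) < (M : ℝ) ^ m := by positivity
  unfold Uslice
  refine (mul_le_mul_of_nonneg_left h hMn.le).trans ?_
  rw [mul_add]
  have e : (M : ℝ) ^ m * (2 * (M : ℝ) ^ m * (2 * ((1 / s + 1 / s ^ 2) * δ)))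
      = 4 * (1 / s + 1 / s ^ 2) * ((M : ℝ) ^ (2 * m) * δ) := by ring
  rw [e]
  have h2 : (M : ℝ) ^ (2 * m) * δ ≤ 1 := by
    rw [hδ, ← div_eq_mul_inv]
    apply div_le_one_of_le₀ _ (by positivity)
    exact pow_le_pow_right₀ hM1 (by omega)
  have h3 : 0 ≤ 4 * (1 / s + 1 / s ^ 2) := by positivity
  nlinarith

lemma retained_append {M : ℕ} (ω : PercSpace 2 M) (w : List (Alpha 2 M)) (a : Alpha 2 M) :
    Retained 2 M ω (w ++ [a]) ↔ Retained 2 M ω w ∧ ω ⟨w ++ [a], by simp⟩ = true := by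
  constructor
  · intro h
    exact ⟨fun u hu hp => h u hu (hp.trans (List.prefix_append _ _)), h _ _ (List.prefix_refl _)⟩
  · rintro ⟨h1, h2⟩ u hu hp
    rw [List.prefix_concat_iff] at hp
    rcases hp with rfl | hp
    · exact h2
    · exact h1 u hu hp

lemma retW_congr {M : ℕ} {ω ω₀ : PercSpace 2 M} {m : ℕ}
    (h : ∀ w : Word 2 M, w.1.length ≤ m → ω w = ω₀ w) : retW M ω m = retW M ω₀ m := by
  ext w
  rw [mem_retW, mem_retW]
  apply and_congr_right
  intro hl
  unfold Retained
  constructor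
  · intro h1 u hu hp
    rw [← h ⟨u, hu⟩ (hp.length_le.trans hl.le)]; exact h1 u hu hp
  · intro h1 u hu hp
    rw [h ⟨u, hu⟩ (hp.length_le.trans hl.le)]; exact h1 u hu hp

def childEmb (M : ℕ) : (List (Alpha 2 M) × Alpha 2 M) ↪ Word 2 M where
  toFun x := ⟨x.1 ++ [x.2], by simp⟩
  inj' := by
    rintro ⟨w, a⟩ ⟨w', a'⟩ h
    simpa using congrArg Subtype.val h

lemma retW_succ_sum {M : ℕ} (ω : PercSpace 2 M) (m : ℕ) (f : List (Alpha 2 M) → ℝ) :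
    ∑ w ∈ retW M ω (m + 1), f w =
      ∑ u ∈ ((retW M ω m) ×ˢ (Finset.univ : Finset (Alpha 2 M))).map (childEmb M),
        f u.1 * (if ω u = true then 1 else 0) := by
  classical
  simp only [mul_ite, mul_one, mul_zero]
  rw [← Finset.sum_filter]
  symm
  apply Finset.sum_bij (fun (u : Word 2 M) _ => u.1)
  · intro u hu
    simp only [Finset.mem_filter, Finset.mem_map, Finset.mem_product, Finset.mem_univ, and_true] at hu
    obtain ⟨⟨⟨w, a⟩, hw, rfl⟩, hu⟩ := hu
    rw [mem_retW] at hw ⊢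
    refine ⟨(List.length_append (as := w) (bs := [a])).trans (congrArg (· + 1) hw.1), ?_⟩
    exact (retained_append ω w a).mpr ⟨hw.2, hu⟩
  · intro u _ u' _ h
    exact Subtype.ext h
  · intro w hw
    rw [mem_retW] at hw
    induction w using List.reverseRecOn with
    | nil => simp at hw
    | append_singleton w a _ =>
      have h2 := (retained_append ω w a).mp hw.2
      refine ⟨childEmb M (w, a), ?_, rfl⟩
      simp only [Finset.mem_filter, Finset.mem_map, Finset.mem_product, Finset.mem_univ, and_true]
      exact ⟨⟨(w, a), mem_retW.mpr ⟨by simpa using hw.1, h2.1⟩, rfl⟩, h2.2⟩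
  · intros; rfl

lemma line_bound {M : ℕ} (hM : 2 ≤ M) {p : ℝ} {P : Measure (PercSpace 2 M)} (hP : IsBernoulliPerc 2 M p P)
    (hp : 0 < p) (m : ℕ) (z v : E2) (hv : ∀ i, 0 < v i) (hv1 : ‖v‖ = 1) (A : PercSpace 2 M → ℝ)
    (hA : ∀ ω ω₀ : PercSpace 2 M, (∀ w : Word 2 M, w.1.length ≤ m → ω w = ω₀ w) → A ω = A ω₀)
    (C bn ε : ℝ) (hε : 0 < ε) (hε1 : ε < 1) (hbn : 0 < bn)
    (hAU : ∀ ω, Uslice M ω m z v ≤ A ω + C) (hCb : C ≤ ε / 6 * bn) :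
    P {ω | bn < A ω ∧ p * M * (1 + 2 * ε / 3) * A ω < Uslice M ω (m + 1) z v} ≤
      ENNReal.ofReal (Real.exp (-(p ^ 2 * ε ^ 2 * M * bn / (4 * √2)))) := by
  have := hP.1
  have hM0 : 0 < M := by omega
  have hMr : (0 : ℝ) < M := by positivity
  let S : Finset (Word 2 M) :=
    (List.finite_length_le (Alpha 2 M) m).toFinset.subtype (fun w => w ≠ [])
  have hS : ∀ w : Word 2 M, w ∈ S ↔ w.1.length ≤ m := by
    intro w; simp [S]
  apply cyl_cond S
  intro ω₀
  by_cases hA0 : bn < A ω₀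
  swap
  · have : {ω | bn < A ω ∧ p * M * (1 + 2 * ε / 3) * A ω < Uslice M ω (m + 1) z v} ∩ cylS S ω₀ = ∅ := by
      rw [Set.eq_empty_iff_forall_notMem]
      rintro ω ⟨⟨h1, _⟩, h2⟩
      rw [hA ω ω₀ (fun w hw => h2 w ((hS w).mpr hw))] at h1
      exact hA0 h1
    rw [this]
    simp
  let T : Finset (Word 2 M) := ((retW M ω₀ m) ×ˢ (Finset.univ : Finset (Alpha 2 M))).map (childEmb M)
  have hT : ∀ u ∈ T, u.1.length = m + 1 := by
    intro u hu
    simp only [T, Finset.mem_map, Finset.mem_product, Finset.mem_univ, and_true] at hu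
    obtain ⟨⟨w, a⟩, hw, rfl⟩ := hu
    exact (List.length_append (as := w) (bs := [a])).trans (congrArg (· + 1) (mem_retW.mp hw).1)
  have hST : Disjoint S T := by
    rw [Finset.disjoint_left]
    intro u h1 h2
    have := (hS u).mp h1
    have := hT u h2
    omega
  let c : Word 2 M → ℝ := fun u => (M : ℝ) ^ (m + 1) * wlen M u.1 z v
  have hc : ∀ u, 0 ≤ c u := fun u => mul_nonneg (by positivity) (wlen_nonneg _ _ _ _)
  have hc2 : ∀ u ∈ T, c u ≤ √2 := by
    intro u hu
    have h1 := glen_le (h := ((M : ℝ) ^ (m + 1))⁻¹) (by positivity) (idxW M u.1) z v hv hv1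
    simp only [c, wlen, hT u hu]
    have hMn : (0 : ℝ) < (M : ℝ) ^ (m + 1) := by positivity
    calc _ ≤ (M : ℝ) ^ (m + 1) * (√2 * ((M : ℝ) ^ (m + 1))⁻¹) := by gcongr
      _ = √2 := by field_simp
  have hsum : ∑ u ∈ T, c u ≤ M * Uslice M ω₀ m z v := by
    simp only [T, c, Finset.sum_map, Finset.sum_product, Uslice]
    rw [← mul_assoc, ← pow_succ', Finset.mul_sum]
    apply Finset.sum_le_sum
    intro w _
    rw [← Finset.mul_sum]
    exact mul_le_mul_of_nonneg_left (sum_children_le hM0 w z v hv) (by positivity)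
  set A0 := A ω₀ with hA0d
  have hA0p : 0 < A0 := hbn.trans hA0
  have hCA : C ≤ ε / 6 * A0 := hCb.trans (by gcongr)
  have hU0 := hAU ω₀
  have hsum2 : ∑ u ∈ T, c u ≤ M * (A0 * (1 + ε / 6)) := by
    refine hsum.trans (mul_le_mul_of_nonneg_left ?_ hMr.le)
    linarith
  have hsq2 : (0 : ℝ) < √2 := by positivity
  have hsq : ∑ u ∈ T, c u ^ 2 ≤ 2 * √2 * M * A0 := by
    calc ∑ u ∈ T, c u ^ 2 ≤ ∑ u ∈ T, √2 * c u := by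
          apply Finset.sum_le_sum
          intro u hu
          rw [sq]
          exact mul_le_mul_of_nonneg_right (hc2 u hu) (hc u)
      _ = √2 * ∑ u ∈ T, c u := by rw [Finset.mul_sum]
      _ ≤ √2 * (M * (A0 * 2)) := by
          refine mul_le_mul_of_nonneg_left (hsum2.trans ?_) hsq2.le
          gcongr
          linarith
      _ = _ := by ring
  have htail := weighted_tail hP hp.le T c hc (2 * √2 * M * A0) (p * M * ε * A0 / 2)
    (p * M * (1 + 2 * ε / 3) * A0) (by positivity) hsq (by positivity) (by
      have h1 : p * ∑ u ∈ T, c u ≤ p * (M * (A0 * (1 + ε / 6))) := by gcongr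
      refine (add_le_add_left h1 _).trans (le_of_eq ?_)
      ring)
  calc _ ≤ P ({ω | p * M * (1 + 2 * ε / 3) * A0 ≤ ∑ w ∈ T, c w * (if ω w = true then 1 else 0)} ∩ cylS S ω₀) := by
        apply measure_mono
        rintro ω ⟨⟨h1, h2⟩, h3⟩
        refine ⟨?_, h3⟩
        have hag : ∀ w : Word 2 M, w.1.length ≤ m → ω w = ω₀ w := fun w hw => h3 w ((hS w).mpr hw)
        rw [hA ω ω₀ hag] at h2
        refine h2.le.trans (le_of_eq ?_)
        simp only [Uslice, T, c]
        rw [retW_succ_sum ω m, retW_congr hag, Finset.mul_sum]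
        simp only [mul_assoc]
    _ = P {ω | p * M * (1 + 2 * ε / 3) * A0 ≤ ∑ w ∈ T, c w * (if ω w = true then 1 else 0)} * P (cylS S ω₀) :=
        cyl_inter hP S T hST c _ ω₀
    _ ≤ _ := by
        gcongr
        rw [← ENNReal.ofReal_toReal (measure_ne_top P _)]
        apply ENNReal.ofReal_le_ofReal
        refine htail.trans (Real.exp_le_exp.mpr ?_)
        have e : -2 * (p * M * ε * A0 / 2) ^ 2 / (2 * √2 * M * A0) = -(p ^ 2 * ε ^ 2 * M * A0 / (4 * √2)) := by
          field_simp
          ring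
        rw [e]
        apply neg_le_neg
        gcongr

/-- almost surely, eventually either `aₙ ≤ bₙ` or `aₙ₊₁ ≤ λ aₙ`,
where `aₙ` is the maximum over the discretized family `𝔏ₙ^θ` of the rescaled
slice lengths `M^{n-1} L_{n-1}(ℓ)`. -/
theorem rescaled_slice_max_dichotomy
    (M : ℕ) (hM : 2 ≤ M) (p : ℝ) (hp0 : ((M : ℝ))⁻¹ ^ 2 < p) (hp1 : p ≤ 1)
    (P : Measure (PercSpace 2 M)) (hP : IsBernoulliPerc 2 M p P)
    (θ : ℝ) (hθ : θ ∈ Set.Ioo 0 (π / 4))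
    (ε : ℝ) (hε : ε ∈ Set.Ioo 0 (min p (1 / 10))) (hMpε : (M : ℝ) * p * (1 + ε) < 1)
    (r lam : ℝ) (hr : r = Real.sqrt 2 * p ^ 2 * ε ^ 2 / 9)
    (hlam : lam = p * M * (1 + 2 * ε / 3))
    (b : ℕ → ℝ) (hb : ∀ n : ℕ, b n = 8 * Real.log M / r * n)
    (Δseq : ℕ → Set (EuclideanSpace ℝ (Fin 2)))
    (hΔsub : ∀ n, Δseq n ⊆ diagSeg)
    (hΔmono : ∀ n, Δseq n ⊆ Δseq (n + 1))
    (hΔdense : ∀ n, ∀ x ∈ diagSeg, ∃ y ∈ Δseq n, dist x y ≤ (M : ℝ) ^ (-(2 * n : ℤ)))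
    (hΔcard : ∀ n, (Δseq n).ncard = M ^ (2 * n))
    (Aseq : ℕ → Set ℝ)
    (hAsub : ∀ n, Aseq n ⊆ Set.Ioo θ (π / 2 - θ))
    (hAmono : ∀ n, Aseq n ⊆ Aseq (n + 1))
    (hAdense : ∀ n, ∀ α ∈ Set.Ioo θ (π / 2 - θ), ∃ β ∈ Aseq n, |α - β| ≤ (M : ℝ) ^ (-(2 * n : ℤ)))
    (hAcard : ∀ n, (Aseq n).ncard = M ^ (2 * n))
    (a : PercSpace 2 M → ℕ → ℝ≥0∞)
    (ha : ∀ ω n, a ω n = ⨆ z ∈ Δseq n, ⨆ α ∈ Aseq n,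
        ENNReal.ofReal ((M : ℝ) ^ ((n : ℤ) - 1)) *
          μH[1] (approx 2 M ω (n - 1) ∩ lineSeg z (dirVec α))) :
    ∀ᵐ ω ∂P, ∃ N₀ : ℕ, ∀ n ≥ N₀,
      a ω n ≤ ENNReal.ofReal (b n) ∨ a ω (n + 1) ≤ ENNReal.ofReal lam * a ω n := by
  have := hP.1
  have hM0 : 0 < M := by omega
  have hMr : (0 : ℝ) < M := by positivity
  have hM2 : (2 : ℝ) ≤ M := by exact_mod_cast hM
  have hp : 0 < p := lt_trans (by positivity) hp0
  have hε0 : 0 < ε := hε.1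
  have hε1 : ε < 1 := by
    have := hε.2.trans_le (min_le_right p (1 / 10)); linarith
  have hlog : 0 < Real.log M := Real.log_pos (by linarith)
  have hr0 : 0 < r := by rw [hr]; positivity
  have hlam0 : 0 < lam := by rw [hlam]; positivity
  set s := Real.sin θ with hs
  have hpi := Real.pi_pos
  have hs0 : 0 < s := Real.sin_pos_of_pos_of_lt_pi hθ.1 (by linarith [hθ.2])
  set C := 4 * (1 / s + 1 / s ^ 2) with hC
  have hC0 : 0 ≤ C := by positivity
  have hdir : ∀ n, ∀ α ∈ Aseq n, ∀ i, s ≤ (dirVec α) i := by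
    intro n α hα i
    have h := hAsub n hα
    have h1 := hθ.1
    have h2 := hθ.2
    fin_cases i
    · have : s ≤ Real.cos α := by
        rw [← Real.sin_pi_div_two_sub]
        exact Real.sin_le_sin_of_le_of_le_pi_div_two (by linarith) (by linarith [h.1]) (by linarith [h.2])
      simpa [dirVec] using this
    · have : s ≤ Real.sin α :=
        Real.sin_le_sin_of_le_of_le_pi_div_two (by linarith) (by linarith [h.2]) (by linarith [h.1])
      simpa [dirVec] using this
  have hdir1 : ∀ α, ‖dirVec α‖ = 1 := by
    intro α
    rw [EuclideanSpace.norm_eq, Fin.sum_univ_two]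
    simp [dirVec]
  -- the value of `a` through rescaled slices
  have haU : ∀ ω m, a ω (m + 1) = ⨆ z ∈ Δseq (m + 1), ⨆ α ∈ Aseq (m + 1),
      ENNReal.ofReal (Uslice M ω m z (dirVec α)) := by
    intro ω m
    rw [ha]
    refine iSup_congr fun z => iSup_congr fun hz => iSup_congr fun α => iSup_congr fun hα => ?_
    have e : (((m + 1 : ℕ) : ℤ) - 1) = (m : ℤ) := by push_cast; ring
    rw [Nat.add_sub_cancel, slice_eq hM0 ω m z (dirVec α) (fun i => hs0.trans_le (hdir _ α hα i)) (hdir1 α),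
      e, zpow_natCast, ← ENNReal.ofReal_mul (by positivity)]
    rfl
  have haTop : ∀ ω m, a ω (m + 1) ≠ ⊤ := by
    intro ω m
    rw [haU]
    apply ne_top_of_le_ne_top (b := ENNReal.ofReal ((M : ℝ) ^ m * ∑ w ∈ retW M ω m, √2 * ((M : ℝ) ^ w.length)⁻¹))
      ENNReal.ofReal_ne_top
    refine iSup₂_le fun z hz => iSup₂_le fun α hα => ENNReal.ofReal_le_ofReal ?_
    unfold Uslice
    refine mul_le_mul_of_nonneg_left (Finset.sum_le_sum fun w _ => ?_) (by positivity)
    exact glen_le (by positivity) _ _ _ (fun i => hs0.trans_le (hdir _ α hα i)) (hdir1 α)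
  have hdep : ∀ m (ω ω₀ : PercSpace 2 M), (∀ w : Word 2 M, w.1.length ≤ m → ω w = ω₀ w) →
      (a ω (m + 1)).toReal = (a ω₀ (m + 1)).toReal := by
    intro m ω ω₀ h
    rw [haU, haU]
    simp only [Uslice, retW_congr h]
  have hz01 : ∀ n, ∀ z ∈ Δseq n, ∀ i, 0 ≤ z i ∧ z i ≤ 1 := by
    intro n z hz i
    have h := hΔsub n hz
    simp only [diagSeg, mem_ofPred_eq] at h
    obtain ⟨h1, h2, h3⟩ := h
    fin_cases i
    · exact ⟨h2, h3⟩
    · constructor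
      · show 0 ≤ z 1
        linarith
      · show z 1 ≤ 1
        linarith
  have hUA : ∀ m, ∀ z ∈ Δseq (m + 2), ∀ α ∈ Aseq (m + 2), ∀ ω,
      Uslice M ω m z (dirVec α) ≤ (a ω (m + 1)).toReal + C := by
    intro m z hz α hα ω
    obtain ⟨z', hz', hzz⟩ := hΔdense (m + 1) z (hΔsub _ hz)
    obtain ⟨α', hα', hαα⟩ := hAdense (m + 1) α (hAsub _ hα)
    have e : (M : ℝ) ^ (-(2 * ((m + 1 : ℕ) : ℤ))) = ((M : ℝ) ^ (2 * (m + 1)))⁻¹ := by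
      rw [zpow_neg]; norm_cast
    rw [e] at hzz hαα
    have h1 := Uslice_lip hM0 ω m hs0 z (dirVec α) z' (dirVec α') (hdir _ α hα) (hdir _ α' hα')
      (fun i => by
        refine le_trans ?_ hzz
        rw [EuclideanSpace.dist_eq]
        apply Real.le_sqrt_of_sq_le
        rw [← Real.dist_eq]
        exact Finset.single_le_sum (f := fun i => dist (z i) (z' i) ^ 2) (fun i _ => by positivity)
          (Finset.mem_univ i))
      (fun i => by
        refine le_trans ?_ hαα
        fin_cases i
        · simpa [dirVec] using Real.abs_cos_sub_cos_le α α'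
        · simpa [dirVec] using Real.abs_sin_sub_sin_le α α')
      (hz01 _ z' hz') rfl
    refine h1.trans (add_le_add_left ?_ _)
    rw [← ENNReal.ofReal_le_iff_le_toReal (haTop ω m), haU]
    exact le_iSup₂_of_le z' hz' (le_iSup₂_of_le α' hα' le_rfl)
  -- eventually the error is small
  have hbt : Filter.Tendsto (fun n : ℕ => ε / 6 * b n) Filter.atTop Filter.atTop := by
    simp only [hb]
    apply Filter.Tendsto.const_mul_atTop (by positivity)
    exact Filter.Tendsto.const_mul_atTop (by positivity) tendsto_natCast_atTop_atTop
  obtain ⟨N1, hN1⟩ := Filter.eventually_atTop.mp (hbt.eventually_ge_atTop C)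
  let Fail : ℕ → Set (PercSpace 2 M) := fun n =>
    {ω | N1 + 1 ≤ n ∧ ¬ (a ω n ≤ ENNReal.ofReal (b n) ∨ a ω (n + 1) ≤ ENNReal.ofReal lam * a ω n)}
  have hFail : ∀ n, P (Fail n) ≤ ENNReal.ofReal ((1 / 2 : ℝ) ^ n) := by
    intro n
    by_cases hn : N1 + 1 ≤ n
    swap
    · have hemp : Fail n = ∅ := by
        rw [Set.eq_empty_iff_forall_notMem]
        rintro ω ⟨h1, _⟩
        exact hn h1
      rw [hemp, measure_empty]
      exact zero_le
    obtain ⟨m, rfl⟩ : ∃ m, n = m + 1 := ⟨n - 1, by omega⟩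
    have hΔf : (Δseq (m + 2)).Finite := Set.finite_of_ncard_ne_zero (by rw [hΔcard]; positivity)
    have hAf : (Aseq (m + 2)).Finite := Set.finite_of_ncard_ne_zero (by rw [hAcard]; positivity)
    have hbn : 0 < b (m + 1) := by rw [hb]; positivity
    set β := Real.exp (-(p ^ 2 * ε ^ 2 * M * b (m + 1) / (4 * √2))) with hβ
    have hcover : Fail (m + 1) ⊆ ⋃ x ∈ hΔf.toFinset ×ˢ hAf.toFinset,
        {ω | b (m + 1) < (a ω (m + 1)).toReal ∧
          p * M * (1 + 2 * ε / 3) * (a ω (m + 1)).toReal < Uslice M ω (m + 1) x.1 (dirVec x.2)} := by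
      rintro ω ⟨_, hω⟩
      rw [not_or, not_le, not_le] at hω
      obtain ⟨h1, h2⟩ := hω
      rw [haU ω (m + 1)] at h2
      simp only [lt_iSup_iff] at h2
      obtain ⟨z, hz, α, hα, h2⟩ := h2
      simp only [mem_iUnion]
      refine ⟨(z, α), by simp [hz, hα], ?_, ?_⟩
      · exact (ENNReal.ofReal_lt_iff_lt_toReal hbn.le (haTop ω m)).mp h1
      · rw [← ENNReal.ofReal_toReal (haTop ω m), ← ENNReal.ofReal_mul hlam0.le] at h2
        have := (ENNReal.ofReal_lt_ofReal_iff_of_nonneg (by positivity)).mp h2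
        rwa [hlam] at this
    calc P (Fail (m + 1)) ≤ ∑ x ∈ hΔf.toFinset ×ˢ hAf.toFinset, ENNReal.ofReal β := by
          refine (measure_mono hcover).trans ((measure_biUnion_finset_le _ _).trans ?_)
          apply Finset.sum_le_sum
          rintro ⟨z, α⟩ hx
          simp only [Finset.mem_product, Set.Finite.mem_toFinset] at hx
          exact line_bound hM hP hp m z (dirVec α) (fun i => hs0.trans_le (hdir _ α hx.2 i)) (hdir1 α)
            (fun ω => (a ω (m + 1)).toReal) (hdep m) C (b (m + 1)) ε hε0 hε1 hbn
            (hUA m z hx.1 α hx.2) (hN1 (m + 1) (by omega))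
      _ = ENNReal.ofReal ((M : ℝ) ^ (4 * (m + 2)) * β) := by
          rw [Finset.sum_const, Finset.card_product, ← Set.ncard_eq_toFinset_card _ hΔf,
            ← Set.ncard_eq_toFinset_card _ hAf,
            hΔcard, hAcard, nsmul_eq_mul, ENNReal.ofReal_mul (by positivity), ← pow_add]
          congr 1
          rw [← Nat.cast_pow, ENNReal.ofReal_natCast]
          congr 2
          ring
      _ ≤ _ := by
          apply ENNReal.ofReal_le_ofReal
          have hsq2 : (√2 : ℝ) ^ 2 = 2 := Real.sq_sqrt (by norm_num)
          have e1 : p ^ 2 * ε ^ 2 * M * b (m + 1) / (4 * √2) = 9 * M * (Real.log M * ((m + 1 : ℕ) : ℝ)) := by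
            rw [hb, hr]
            field_simp
            rw [hsq2]
            ring
          have e2 : β ≤ ((M : ℝ) ^ (18 * (m + 1)))⁻¹ := by
            rw [hβ, e1, ← Real.exp_log (by positivity : (0 : ℝ) < ((M : ℝ) ^ (18 * (m + 1)))⁻¹)]
            apply Real.exp_le_exp.mpr
            rw [Real.log_inv, Real.log_pow]
            apply neg_le_neg
            have : 0 ≤ Real.log M * ((m + 1 : ℕ) : ℝ) := by positivity
            push_cast at this ⊢
            nlinarith
          calc (M : ℝ) ^ (4 * (m + 2)) * β ≤ (M : ℝ) ^ (4 * (m + 2)) * ((M : ℝ) ^ (18 * (m + 1)))⁻¹ := by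
                gcongr
            _ ≤ ((M : ℝ) ^ (m + 1))⁻¹ := by
                rw [← div_eq_mul_inv, div_le_iff₀ (by positivity), inv_mul_eq_div, le_div_iff₀ (by positivity),
                  ← pow_add]
                exact pow_le_pow_right₀ (by linarith) (by omega)
            _ ≤ (1 / 2 : ℝ) ^ (m + 1) := by
                rw [one_div, inv_pow]
                gcongr
  have hsum : ∑' n, P (Fail n) ≠ ⊤ := by
    apply ne_top_of_le_ne_top _ (ENNReal.tsum_le_tsum hFail)
    rw [← ENNReal.ofReal_tsum_of_nonneg (fun n => by positivity) summable_geometric_two]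
    exact ENNReal.ofReal_ne_top
  filter_upwards [ae_eventually_notMem hsum] with ω hω
  obtain ⟨N2, hN2⟩ := Filter.eventually_atTop.mp hω
  refine ⟨max N2 (N1 + 1), fun n hn => ?_⟩
  by_contra hcon
  exact hN2 n ((le_max_left _ _).trans hn) ⟨(le_max_right _ _).trans hn, hcon⟩
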